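/- Nullstellensatz for k-regulous functions: let n, k be natural numbers. (1) For every ideal I of R^k(ℝⁿ), the ideal {f ∈ R^k(ℝⁿ) : f(x) = 0 for all x ∈ Z(I)} equals the radical of I, where Z(I) = ⋂_{g ∈ I} Z(g). (2) For every subset E of R^k(ℝⁿ), setting F = ⋂_{g ∈ E} Z(g), one has Z({f ∈ R^k(ℝⁿ) : f vanishes on F}) = F. -/

import Mathlib

open MvPolynomial

/-- A function `f : ℝⁿ → ℝ` is `k`-regulous if it is of class `C^k` on all of `ℝⁿ` and
agrees with a rational function: there are polynomials `p`, `q` with `q ≠ 0` and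
`q(x) * f(x) = p(x)` for every `x`. -/
def IsRegulous (n k : ℕ) (f : (Fin n → ℝ) → ℝ) : Prop :=
  ContDiff ℝ k f ∧ ∃ p q : MvPolynomial (Fin n) ℝ, q ≠ 0 ∧
    ∀ x : Fin n → ℝ, eval x q * f x = eval x p

/-- The ring `R^k(ℝⁿ)` of `k`-regulous functions, as a subring of the ring of all
functions `ℝⁿ → ℝ` with pointwise operations. -/
def regulousRing (n k : ℕ) : Subring ((Fin n → ℝ) → ℝ) where
  carrier := {f | IsRegulous n k f}
  one_mem' := ⟨contDiff_const, 1, 1, one_ne_zero, by simp⟩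
  zero_mem' := ⟨contDiff_const, 0, 1, one_ne_zero, by simp⟩
  mul_mem' := by
    rintro f g ⟨hf, p₁, q₁, hq₁, h₁⟩ ⟨hg, p₂, q₂, hq₂, h₂⟩
    refine ⟨hf.mul hg, p₁ * p₂, q₁ * q₂, mul_ne_zero hq₁ hq₂, fun x => ?_⟩
    simp only [eval_mul, Pi.mul_apply]
    linear_combination (eval x q₂ * g x) * h₁ x + eval x p₁ * h₂ x
  add_mem' := by
    rintro f g ⟨hf, p₁, q₁, hq₁, h₁⟩ ⟨hg, p₂, q₂, hq₂, h₂⟩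
    refine ⟨hf.add hg, p₁ * q₂ + p₂ * q₁, q₁ * q₂, mul_ne_zero hq₁ hq₂, fun x => ?_⟩
    simp only [eval_mul, eval_add, Pi.add_apply]
    linear_combination (eval x q₂) * h₁ x + (eval x q₁) * h₂ x
  neg_mem' := by
    rintro f ⟨hf, p, q, hq, h⟩
    refine ⟨hf.neg, -p, q, hq, fun x => ?_⟩
    simp only [map_neg, Pi.neg_apply]
    linear_combination -(h x)

/-!
Geometry enters through the real points of a finitely generated `ℝ`-algebra. By induction on
generators, an injection of such a domain into another induces a map on real points that is open
off a hypersurface: a simple real root of the minimal equation of a generator persists under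
perturbation of its coefficients. By Noether normalization, the real points near a real point off a
suitable hypersurface are Zariski dense.

Along an ultrafilter, a family of points of `ℝⁿ` defines a prime ideal of `ℝ[x₁, …, xₙ]`, the
polynomials vanishing along it, and the family is generic for the quotient domain.

* If no element of an ideal `I` had the same zero set as `I`, an ultrafilter of counterexamples
  would be generic for a domain near whose real points every `g ∈ I` vanishes on a dense set, hence
  at the counterexamples.
* Suppose `g ≥ 0` and `f` vanishes on `Z(g)`. Minimizing `g` over the compact sets
  `{∑ xᵢ² ≤ s, 1 ≤ s f}`, a generic family of minima has `g` algebraic over `ℝ[s]`, since otherwise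
  `g` could be lowered with `s` fixed. So `g ≥ s ^ (-M)` on these sets, which is Łojasiewicz's
  inequality `f ^ M' = O(g)`.
* Under this inequality `f ^ a / g`, extended by `0`, is of class `C^k` for large `a`; so
  `f ^ a = h g` with `h` regulous, and `f` lies in the radical of `I` once `g ∈ I` has the same zero
  set as `I`.
-/

open Filter Topology

section RealPoints

variable {R S : Type*} [CommRing R] [Algebra ℝ R] [CommRing S] [Algebra ℝ S]

/-- The real points of an `ℝ`-algebra carry the topology of pointwise convergence. -/
instance realPointTopology : TopologicalSpace (R →ₐ[ℝ] ℝ) :=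
  TopologicalSpace.induced (fun φ a => φ a) inferInstance

theorem continuous_realPoint_apply (a : R) : Continuous fun φ : R →ₐ[ℝ] ℝ => φ a :=
  (continuous_apply a).comp continuous_induced_dom

theorem continuous_realPoint_iff {X : Type*} [TopologicalSpace X] {F : X → R →ₐ[ℝ] ℝ} :
    Continuous F ↔ ∀ a, Continuous fun x => F x a :=
  continuous_induced_rng.trans continuous_pi_iff

theorem continuous_realPoint_comp (ι : R →ₐ[ℝ] S) :
    Continuous fun φ : S →ₐ[ℝ] ℝ => φ.comp ι :=
  continuous_realPoint_iff.2 fun a => continuous_realPoint_apply (ι a)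

theorem isInducing_realPoint_comp {Φ : R →ₐ[ℝ] S} (hΦ : Function.Surjective Φ) :
    IsInducing fun φ : S →ₐ[ℝ] ℝ => φ.comp Φ := by
  refine .of_comp (continuous_realPoint_comp Φ) continuous_induced_dom ?_
  exact (hΦ.isEmbedding_comp Φ).isInducing.comp (.induced _)

/-- The real point of `R[X]` lying over the real point `ψ` of `R` and sending `X` to `τ`. -/
noncomputable def realPointPolynomial (ψ : R →ₐ[ℝ] ℝ) (τ : ℝ) : Polynomial R →ₐ[ℝ] ℝ :=
  (Polynomial.aeval τ).comp (Polynomial.mapAlgHom ψ)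

theorem realPointPolynomial_apply (ψ : R →ₐ[ℝ] ℝ) (τ : ℝ) (p : Polynomial R) :
    realPointPolynomial ψ τ p = (p.map (ψ : R →+* ℝ)).eval τ :=
  Polynomial.coe_aeval_eq_eval τ ▸ rfl

theorem realPointPolynomial_C (ψ : R →ₐ[ℝ] ℝ) (τ : ℝ) (a : R) :
    realPointPolynomial ψ τ (Polynomial.C a) = ψ a := by
  simp [realPointPolynomial_apply]

theorem realPointPolynomial_comp_C_X (φ : Polynomial R →ₐ[ℝ] ℝ) :
    realPointPolynomial (φ.comp Polynomial.CAlgHom) (φ Polynomial.X) = φ := by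
  ext <;> simp [realPointPolynomial_apply]

theorem continuous_realPointPolynomial :
    Continuous fun x : (R →ₐ[ℝ] ℝ) × ℝ => realPointPolynomial x.1 x.2 := by
  refine continuous_realPoint_iff.2 fun p => ?_
  simp only [realPointPolynomial_apply, Polynomial.eval_map, Polynomial.eval₂_eq_sum_range]
  exact continuous_finsetSum _ fun i _ =>
    ((continuous_realPoint_apply _).comp continuous_fst).mul (continuous_snd.pow i)

end RealPoints

section GenericOpenness

theorem eventually_exists_eq_zero_of_hasDerivAt {X : Type*} [TopologicalSpace X]
    {F : X → ℝ → ℝ} (hF : Continuous F.uncurry) {x₀ : X} {τ d : ℝ} (hτ : F x₀ τ = 0)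
    (hd : HasDerivAt (F x₀) d τ) (hd₀ : d ≠ 0) {V : Set (X × ℝ)} (hV : V ∈ 𝓝 (x₀, τ)) :
    ∀ᶠ x in 𝓝 x₀, ∃ σ, (x, σ) ∈ V ∧ F x σ = 0 := by
  obtain ⟨V₁, hV₁, V₂, hV₂, hV⟩ := mem_nhds_prod_iff.1 hV
  obtain ⟨ε, hε, hball⟩ := Metric.mem_nhds_iff.1 hV₂
  have hnear : ∀ᶠ σ in 𝓝 τ, σ ∈ Metric.ball τ ε := Metric.ball_mem_nhds τ hε
  obtain ⟨a, ha, haF⟩ : ∃ a ∈ Metric.ball τ ε, F x₀ a < 0 := by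
    by_contra! hpos
    exact hd₀ (IsLocalMin.hasDerivAt_eq_zero (hnear.mono fun σ hσ => hτ ▸ hpos σ hσ) hd)
  obtain ⟨b, hb, hbF⟩ : ∃ b ∈ Metric.ball τ ε, 0 < F x₀ b := by
    by_contra! hneg
    exact hd₀ (IsLocalMax.hasDerivAt_eq_zero (hnear.mono fun σ hσ => hτ ▸ hneg σ hσ) hd)
  have hFσ (σ : ℝ) : Continuous fun x => F x σ := hF.comp (by fun_prop : Continuous fun x => (x, σ))
  filter_upwards [(hFσ a).continuousAt.eventually (gt_mem_nhds haF),
    (hFσ b).continuousAt.eventually (lt_mem_nhds hbF), hV₁] with x hxa hxb hx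
  have hFx : Continuous (F x) := hF.comp (by fun_prop : Continuous fun σ => (x, σ))
  obtain ⟨σ, hσ, hσF⟩ := intermediate_value_uIcc hFx.continuousOn
    (Set.mem_uIcc_of_le hxa.le hxb.le)
  exact ⟨σ, hV ⟨hx, hball ((convex_ball τ ε).ordConnected.uIcc_subset ha hb hσ)⟩, hσF⟩

variable {R S T : Type*} [CommRing R] [Algebra ℝ R] [CommRing S] [Algebra ℝ S]
  [CommRing T] [Algebra ℝ T]

/-- The map induced by `ι` on real points is open at every real point where a suitable nonzero
element of `S` does not vanish. -/
def GenericallyOpen (ι : R →ₐ[ℝ] S) : Prop :=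
  ∃ t ≠ 0, ∀ φ : S →ₐ[ℝ] ℝ, φ t ≠ 0 → 𝓝 (φ.comp ι) ≤ map (fun φ' => φ'.comp ι) (𝓝 φ)

theorem GenericallyOpen.comp [IsDomain T] {κ : S →ₐ[ℝ] T} {ι : R →ₐ[ℝ] S}
    (hκ : GenericallyOpen κ) (hι : GenericallyOpen ι) (hinj : Function.Injective κ) :
    GenericallyOpen (κ.comp ι) := by
  obtain ⟨t, ht, hopenκ⟩ := hκ
  obtain ⟨u, hu, hopenι⟩ := hι
  refine ⟨t * κ u, mul_ne_zero ht ((map_ne_zero_iff κ hinj).2 hu), fun φ hφ => ?_⟩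
  rw [map_mul, mul_ne_zero_iff] at hφ
  calc 𝓝 (φ.comp (κ.comp ι)) ≤ map (fun φ' => φ'.comp ι) (𝓝 (φ.comp κ)) := hopenι _ hφ.2
    _ ≤ map (fun φ' => φ'.comp ι) (map (fun φ' => φ'.comp κ) (𝓝 φ)) := map_mono (hopenκ φ hφ.1)

theorem GenericallyOpen.of_bijective [Nontrivial S] {ι : R →ₐ[ℝ] S}
    (hι : Function.Bijective ι) : GenericallyOpen ι := by
  refine ⟨1, one_ne_zero, fun φ _ => ?_⟩
  have hsurj : Function.Surjective fun φ : S →ₐ[ℝ] ℝ => φ.comp ι := fun ψ =>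
    ⟨ψ.comp (AlgEquiv.ofBijective ι hι).symm, AlgHom.ext fun a =>
      congrArg ψ ((AlgEquiv.ofBijective ι hι).symm_apply_apply a)⟩
  rw [(isInducing_realPoint_comp hι.2).nhds_eq_comap, map_comap_of_surjective hsurj]

-- Pseudo-division: cancelling leading terms against `m` lowers the degree of `u` and, since
-- `ψ m.leadingCoeff ≠ 0`, does not affect whether `u` vanishes at `(ψ, τ)`.
theorem realPointPolynomial_eq_zero_of_root {Φ : Polynomial R →ₐ[ℝ] S} {m : Polynomial R}
    (hm : Φ m = 0) (hdeg : 0 < m.natDegree)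
    (hmin : ∀ u, Φ u = 0 → u.natDegree < m.natDegree → u = 0)
    {ψ : R →ₐ[ℝ] ℝ} (hψ : ψ m.leadingCoeff ≠ 0) {τ : ℝ} (hτ : realPointPolynomial ψ τ m = 0)
    (u : Polynomial R) (hu : Φ u = 0) : realPointPolynomial ψ τ u = 0 := by
  induction hd : u.natDegree using Nat.strong_induction_on generalizing u with
  | _ d ih =>
    subst hd
    by_cases hlt : u.natDegree < m.natDegree
    · rw [hmin u hu hlt, map_zero]
    have hle : m.natDegree ≤ u.natDegree := not_lt.1 hlt
    have hcancel : realPointPolynomial ψ τ (m.cancelLeads u) = 0 :=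
      ih _ (Polynomial.natDegree_cancelLeads_lt_of_natDegree_le_natDegree hle (hdeg.trans_le hle))
        _ (by simp [Polynomial.cancelLeads, hm, hu]) rfl
    simpa [Polynomial.cancelLeads, hτ, realPointPolynomial_C, hψ, Nat.sub_eq_zero_of_le hle]
      using hcancel

theorem eventually_exists_realPointPolynomial_of_root {m : Polynomial R}
    {χ : Polynomial R →ₐ[ℝ] ℝ} (hm : χ m = 0) (hder : χ m.derivative ≠ 0)
    {V : Set (Polynomial R →ₐ[ℝ] ℝ)} (hV : V ∈ 𝓝 χ) :
    ∀ᶠ ψ in 𝓝 (χ.comp Polynomial.CAlgHom), ∃ σ, realPointPolynomial ψ σ ∈ V ∧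
      realPointPolynomial ψ σ m = 0 := by
  have hχ := realPointPolynomial_comp_C_X χ
  have hF : Continuous (Function.uncurry fun ψ σ => realPointPolynomial (R := R) ψ σ m) :=
    (continuous_realPoint_apply m).comp continuous_realPointPolynomial
  have hd : HasDerivAt (fun σ => realPointPolynomial (χ.comp Polynomial.CAlgHom) σ m)
      (χ m.derivative) (χ Polynomial.X) := by
    rw [← DFunLike.congr_fun hχ m.derivative]
    simpa only [realPointPolynomial_apply, Polynomial.derivative_map]
      using (m.map _).hasDerivAt (χ Polynomial.X)
  exact eventually_exists_eq_zero_of_hasDerivAt (V := {x | realPointPolynomial x.1 x.2 ∈ V}) hF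
    (by rw [hχ, hm]) hd hder (continuous_realPointPolynomial.continuousAt (by rwa [hχ]))

theorem exists_eventually_exists_realPointPolynomial [IsDomain S] {Φ : Polynomial R →ₐ[ℝ] S}
    (hC : Function.Injective (Φ.comp Polynomial.CAlgHom)) :
    ∃ t ≠ 0, ∀ φ : S →ₐ[ℝ] ℝ, φ t ≠ 0 → ∀ V ∈ 𝓝 (φ.comp Φ),
      ∀ᶠ ψ in 𝓝 ((φ.comp Φ).comp Polynomial.CAlgHom), ∃ σ, realPointPolynomial ψ σ ∈ V ∧
        ∀ u, Φ u = 0 → realPointPolynomial ψ σ u = 0 := by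
  by_cases hker : ∀ u, Φ u = 0 → u = 0
  · refine ⟨1, one_ne_zero, fun φ _ V hV => ?_⟩
    have hslice : Continuous fun ψ : R →ₐ[ℝ] ℝ => realPointPolynomial ψ (φ (Φ Polynomial.X)) :=
      continuous_realPointPolynomial.comp (Continuous.prodMk_left _)
    rw [← realPointPolynomial_comp_C_X (φ.comp Φ)] at hV
    filter_upwards [hslice.continuousAt hV] with ψ hψ
    exact ⟨_, hψ, fun u hu => by rw [hker u hu, map_zero]⟩
  push Not at hker
  obtain ⟨m, ⟨hm, hm₀⟩, hmin⟩ := exists_minimalFor_of_wellFoundedLT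
    (fun u : Polynomial R => Φ u = 0 ∧ u ≠ 0) Polynomial.natDegree hker
  replace hmin (u) (hu : Φ u = 0) (hlt : u.natDegree < m.natDegree) : u = 0 :=
    by_contra fun hu₀ => hlt.not_ge (hmin ⟨hu, hu₀⟩ hlt.le)
  rw [injective_iff_map_eq_zero] at hC
  have hdeg : 0 < m.natDegree := by
    by_contra hd
    rw [Polynomial.eq_C_of_natDegree_eq_zero (Nat.eq_zero_of_not_pos hd)] at hm hm₀
    exact hm₀ (by rw [hC _ hm, map_zero])
  have hlead : Φ (Polynomial.C m.leadingCoeff) ≠ 0 := fun h =>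
    hm₀ (Polynomial.leadingCoeff_eq_zero.1 (hC _ h))
  have hder : Φ m.derivative ≠ 0 := fun h => by
    have := IsAddTorsionFree.of_isTorsionFree ℝ R
    exact hdeg.ne' (Polynomial.derivative_eq_zero.1
      (hmin _ h (Polynomial.natDegree_derivative_lt hdeg.ne')))
  refine ⟨_, mul_ne_zero hlead hder, fun φ hφ V hV => ?_⟩
  rw [map_mul, mul_ne_zero_iff] at hφ
  filter_upwards [eventually_exists_realPointPolynomial_of_root
      (show φ.comp Φ m = 0 by simp [hm]) hφ.2 hV,
    (continuous_realPoint_apply m.leadingCoeff).continuousAt.eventually_ne hφ.1]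
    with ψ ⟨σ, hσV, hσ⟩ hψ
  exact ⟨σ, hσV, realPointPolynomial_eq_zero_of_root hm hdeg hmin hψ hσ⟩

theorem GenericallyOpen.of_surjective_polynomial [IsDomain S] {Φ : Polynomial R →ₐ[ℝ] S}
    (hC : Function.Injective (Φ.comp Polynomial.CAlgHom)) (hΦ : Function.Surjective Φ) :
    GenericallyOpen (Φ.comp Polynomial.CAlgHom) := by
  obtain ⟨t, ht, hlift⟩ := exists_eventually_exists_realPointPolynomial hC
  refine ⟨t, ht, fun φ hφ W hW => ?_⟩
  rw [mem_map, (isInducing_realPoint_comp hΦ).nhds_eq_comap] at hW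
  obtain ⟨V, hV, hVW⟩ := hW
  filter_upwards [hlift φ hφ V hV] with ψ ⟨σ, hσV, hker⟩
  let φ' : S →ₐ[ℝ] ℝ := AlgHom.liftOfSurjective Φ hΦ (realPointPolynomial ψ σ) hker
  have hφ' : φ'.comp Φ = realPointPolynomial ψ σ := AlgHom.liftOfSurjective_comp ..
  have hψ : φ'.comp (Φ.comp Polynomial.CAlgHom) = ψ := by
    rw [← AlgHom.comp_assoc, hφ']
    exact AlgHom.ext (realPointPolynomial_C ψ σ)
  exact hψ ▸ hVW (show φ'.comp Φ ∈ V from hφ' ▸ hσV)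

theorem genericallyOpen_of_injective [IsDomain S] [Algebra.FiniteType ℝ S] {ι : R →ₐ[ℝ] S}
    (hι : Function.Injective ι) : GenericallyOpen ι := by
  have hadjoin (s : Finset S) : ∃ (C : Subalgebra ℝ S) (κ : R →ₐ[ℝ] C),
      C.val.comp κ = ι ∧ ↑s ⊆ (C : Set S) ∧ GenericallyOpen κ := by
    classical
    induction s using Finset.induction with
    | empty => exact ⟨ι.range, ι.rangeRestrict, rfl, by simp, .of_bijective
        ⟨fun _ _ h => hι (congrArg Subtype.val h), ι.rangeRestrict_surjective⟩⟩
    | insert b s _ ih =>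
      obtain ⟨C, κ, rfl, hs, hopen⟩ := ih
      let Ψ : Polynomial C →ₐ[ℝ] S := (Polynomial.aeval b).restrictScalars ℝ
      have hΨ (c : C) : Ψ (Polynomial.C c) = c := Polynomial.aeval_C b c
      have hinj : Function.Injective (Ψ.rangeRestrict.comp Polynomial.CAlgHom) := fun c c' h =>
        Subtype.ext ((hΨ c).symm.trans ((congrArg Subtype.val h).trans (hΨ c')))
      refine ⟨Ψ.range, (Ψ.rangeRestrict.comp Polynomial.CAlgHom).comp κ, AlgHom.ext fun a => hΨ _,
        ?_, (GenericallyOpen.of_surjective_polynomial hinj Ψ.rangeRestrict_surjective).comp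
          hopen hinj⟩
      rw [Finset.coe_insert, Set.insert_subset_iff]
      exact ⟨⟨Polynomial.X, Polynomial.aeval_X b⟩, fun c hc => ⟨Polynomial.C ⟨c, hs hc⟩, hΨ _⟩⟩
  obtain ⟨s, hs⟩ := Algebra.FiniteType.out (R := ℝ) (A := S)
  obtain ⟨C, κ, rfl, hsC, hopen⟩ := hadjoin s
  have hC : C = ⊤ := top_le_iff.1 (hs ▸ Algebra.adjoin_le hsC)
  subst hC
  exact .comp (.of_bijective (Subalgebra.topEquiv (R := ℝ) (A := S)).bijective) hopen
    Subtype.val_injective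

end GenericOpenness

section Density

variable {S : Type*} [CommRing S] [IsDomain S] [Algebra ℝ S] [Algebra.FiniteType ℝ S]

theorem dense_eval_ne_zero {σ : Type*} [Finite σ] {q : MvPolynomial σ ℝ}
    (hq : q ≠ 0) : Dense {x : σ → ℝ | eval x q ≠ 0} := by
  have := Fintype.ofFinite σ
  refine Metric.dense_iff.2 fun a ε hε => ?_
  by_contra hempty
  refine hq (MvPolynomial.funext_set (fun i => Metric.ball (a i) ε) (fun i => ?_) fun x hx => ?_)
  · rw [Real.ball_eq_Ioo]
    exact Set.Ioo_infinite (by linarith)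
  · rw [map_zero]
    by_contra hx₀
    exact hempty ⟨x, by rwa [← ball_pi a hε] at hx, hx₀⟩

theorem exists_frequently_realPoint_ne_zero :
    ∃ t : S, t ≠ 0 ∧ ∀ φ : S →ₐ[ℝ] ℝ, φ t ≠ 0 → ∀ q : S, q ≠ 0 → ∃ᶠ φ' in 𝓝 φ, φ' q ≠ 0 := by
  obtain ⟨m, g, hg, hint⟩ := exists_integral_inj_algHom_of_fg ℝ S
  obtain ⟨t, ht, hopen⟩ := genericallyOpen_of_injective hg
  refine ⟨t, ht, fun φ hφ q hq => ?_⟩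
  obtain ⟨r, hr, hqr⟩ : ∃ r ≠ 0, q ∣ g r := by
    let _ := g.toAlgebra
    have hqint : IsIntegral (MvPolynomial (Fin m) ℝ) q := hint q
    exact hqint.isAlgebraic.exists_nonzero_dvd (mem_nonZeroDivisors_of_ne_zero hq)
  have hφg : φ.comp g = aeval fun i => φ (g (X i)) := by ext; simp
  have hcont : Continuous fun x : Fin m → ℝ => (aeval x : MvPolynomial (Fin m) ℝ →ₐ[ℝ] ℝ) :=
    continuous_realPoint_iff.2 fun p => p.continuous_eval
  have hfreq : ∃ᶠ ψ in 𝓝 (φ.comp g), ψ r ≠ 0 := by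
    rw [hφg]
    exact hcont.continuousAt.frequently
      (mem_closure_iff_frequently.1 (dense_eval_ne_zero hr _))
  refine (frequently_map.1 (hfreq.filter_mono (hopen φ hφ))).mono fun φ' hφ' hq' => hφ' ?_
  exact zero_dvd_iff.1 (hq' ▸ map_dvd φ' hqr)

theorem exists_frequently_realPoint_lt {R : Type*} [CommRing R] [Algebra ℝ R] [Algebra R S]
    [IsScalarTower ℝ R S] {y : S} (hy : Transcendental R y) :
    ∃ t : S, t ≠ 0 ∧ ∀ φ : S →ₐ[ℝ] ℝ, φ t ≠ 0 → ∃ᶠ φ' in 𝓝 φ,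
      (∀ a : R, φ' (algebraMap R S a) = φ (algebraMap R S a)) ∧ φ' y < φ y := by
  let Ψ : Polynomial R →ₐ[ℝ] S := (Polynomial.aeval y).restrictScalars ℝ
  have hΨX : Ψ Polynomial.X = y := Polynomial.aeval_X y
  have hΨC (a : R) : Ψ (Polynomial.C a) = algebraMap R S a := Polynomial.aeval_C y a
  have hΨ : Function.Injective Ψ := transcendental_iff_injective.1 hy
  obtain ⟨t, ht, hopen⟩ := genericallyOpen_of_injective hΨ
  refine ⟨t, ht, fun φ hφ => ?_⟩
  set ψ := (φ.comp Ψ).comp Polynomial.CAlgHom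
  have hcont : Continuous fun σ => realPointPolynomial ψ σ :=
    continuous_realPointPolynomial.comp (Continuous.prodMk_right ψ)
  have hfreq : ∃ᶠ χ in 𝓝 (φ.comp Ψ), (∀ a, χ (Polynomial.C a) = ψ a) ∧
      χ Polynomial.X < φ (Ψ Polynomial.X) := by
    rw [← realPointPolynomial_comp_C_X (φ.comp Ψ)]
    exact hcont.continuousAt.frequently ((frequently_lt_nhds _).mono fun σ hσ =>
      ⟨realPointPolynomial_C ψ σ, by simpa [realPointPolynomial_apply] using hσ⟩)
  simp only [← hΨC, ← hΨX]
  exact frequently_map.1 (hfreq.filter_mono (hopen φ hφ))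

end Density

section GenericFamilies

/-- A family of real points of `S` is generic along the filter `l` when it eventually leaves every
proper hypersurface: it is then a substitute for the generic point of `Spec S`. -/
def IsGeneric {Ω S : Type*} [CommRing S] [Algebra ℝ S] (l : Filter Ω) (e : Ω → S →ₐ[ℝ] ℝ) :
    Prop :=
  ∀ y ≠ 0, ∀ᶠ ω in l, e ω y ≠ 0

variable {Ω : Type*}

theorem exists_isGeneric {ι : Type*} [Finite ι] (U : Ultrafilter Ω) (a : Ω → ι → ℝ) :
    ∃ (P : Ideal (MvPolynomial ι ℝ)) (_ : P.IsPrime) (e : Ω → MvPolynomial ι ℝ ⧸ P →ₐ[ℝ] ℝ),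
      IsGeneric U e ∧ ∀ᶠ ω in U, ∀ i, e ω (Ideal.Quotient.mk P (X i)) = a ω i := by
  let P : Ideal (MvPolynomial ι ℝ) :=
    { carrier := {p | ∀ᶠ ω in U, eval (a ω) p = 0}
      zero_mem' := by simp
      add_mem' := fun hp hq => (hp.and hq).mono fun ω h => by rw [map_add, h.1, h.2, add_zero]
      smul_mem' := fun c p hp => hp.mono fun ω h => by rw [smul_eq_mul, map_mul, h, mul_zero] }
  have hP : P.IsPrime := by
    refine ⟨(Ideal.ne_top_iff_one P).2 fun h => ?_, fun {p q} h => ?_⟩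
    · exact (Eventually.exists h).elim fun ω hω => one_ne_zero (hω ▸ map_one (eval (a ω))).symm
    · exact Ultrafilter.eventually_or.1 (Eventually.mono h fun ω hω => by
        rwa [map_mul, mul_eq_zero] at hω)
  obtain ⟨s, hs⟩ := IsNoetherian.noetherian P
  have hker : ∀ᶠ ω in U, ∀ p ∈ P, aeval (a ω) p = 0 := by
    have hgens : ∀ᶠ ω in U, ∀ p ∈ s, aeval (a ω) p = 0 :=
      (eventually_all_finset s).2 fun p hp => (hs ▸ Submodule.subset_span hp : p ∈ P)
    filter_upwards [hgens] with ω hω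
    exact hs ▸ Ideal.span_le (I := RingHom.ker (aeval (a ω))).2 hω
  have hlift : ∀ᶠ ω in U, ∃ φ : MvPolynomial ι ℝ ⧸ P →ₐ[ℝ] ℝ,
      ∀ p, φ (Ideal.Quotient.mk P p) = eval (a ω) p :=
    hker.mono fun ω hω => ⟨Ideal.Quotient.liftₐ P (aeval (a ω)) hω, fun p => rfl⟩
  have : Nonempty (MvPolynomial ι ℝ ⧸ P →ₐ[ℝ] ℝ) := ⟨hlift.exists.choose_spec.choose⟩
  obtain ⟨e, he⟩ := hlift.choice
  refine ⟨P, hP, e, fun y hy => ?_, he.mono fun ω hω i => by rw [hω, eval_X]⟩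
  obtain ⟨p, rfl⟩ := Ideal.Quotient.mk_surjective y
  have hp : p ∉ P := fun hp => hy (Ideal.Quotient.eq_zero_iff_mem.2 hp)
  filter_upwards [he, Ultrafilter.eventually_not.2 hp] with ω hω hpω
  rwa [hω]

variable {S : Type*} [CommRing S] [Algebra ℝ S] {l : Filter Ω} {e : Ω → S →ₐ[ℝ] ℝ}

theorem IsGeneric.eq_zero_of_eventually [NeBot l] (he : IsGeneric l e) {y : S}
    (hy : ∀ᶠ ω in l, e ω y = 0) : y = 0 :=
  by_contra fun h => ((he y h).and hy).exists.elim fun _ h => h.1 h.2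

end GenericFamilies

section RegulousRealPoints

theorem coeff_mul_eq_of_eval_mul_eq {u : ℝ → ℝ} (hu : Continuous u) {Q P : Polynomial ℝ}
    (h : ∀ ε, Q.eval ε * u ε = P.eval ε) {i : ℕ} (hQ : ∀ j < i, Q.coeff j = 0) :
    Q.coeff i * u 0 = P.coeff i := by
  induction i generalizing Q P with
  | zero => simpa only [Polynomial.coeff_zero_eq_eval_zero] using h 0
  | succ i ih =>
    have hQ₀ : Q.coeff 0 = 0 := hQ 0 i.succ_pos
    have hP₀ : P.coeff 0 = 0 := by
      rw [Polynomial.coeff_zero_eq_eval_zero, ← h 0, ← Polynomial.coeff_zero_eq_eval_zero, hQ₀,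
        zero_mul]
    have hQX : Q.divX * Polynomial.X = Q := by simpa [hQ₀] using Q.divX_mul_X_add
    have hPX : P.divX * Polynomial.X = P := by simpa [hP₀] using P.divX_mul_X_add
    have hdiv : (fun ε => Q.divX.eval ε * u ε) = fun ε => P.divX.eval ε := by
      refine Continuous.ext_on (dense_compl_singleton (0 : ℝ)) (Q.divX.continuous.mul hu)
        P.divX.continuous fun ε (hε : ε ≠ 0) => mul_right_cancel₀ hε ?_
      have hε' := h ε
      rw [← hQX, ← hPX, Polynomial.eval_mul_X, Polynomial.eval_mul_X] at hε'
      linear_combination hε'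
    simpa only [Polynomial.coeff_divX] using ih (congrFun hdiv) fun j hj => by
      rw [Polynomial.coeff_divX]
      exact hQ (j + 1) (Nat.succ_lt_succ hj)

variable {n k : ℕ} {h : (Fin n → ℝ) → ℝ}

protected theorem IsRegulous.continuous (hh : IsRegulous n k h) : Continuous h := hh.1.continuous

-- Restrict to the pencil of lines through the real points in the direction of a point where the
-- denominator of `h` does not vanish, and compare lowest-order terms.
theorem IsRegulous.exists_realPoint_mul_eq (hh : IsRegulous n k h) {R : Type*} [CommRing R]
    [Algebra ℝ R] (φ₀ : R →ₐ[ℝ] ℝ) (X : Fin n → R) :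
    ∃ s ≠ 0, ∃ r, ∀ φ : R →ₐ[ℝ] ℝ, φ s * h (fun i => φ (X i)) = φ r := by
  obtain ⟨p, q, hq, hpq⟩ := hh.2
  obtain ⟨c, hc : eval c q ≠ 0⟩ := (dense_eval_ne_zero hq).nonempty
  let v (i : Fin n) : ℝ := c i - φ₀ (X i)
  let Φ : MvPolynomial (Fin n) ℝ →ₐ[ℝ] Polynomial R :=
    aeval fun i => Polynomial.C (X i) + Polynomial.C (algebraMap ℝ R (v i)) * Polynomial.X
  have hΦ (φ : R →ₐ[ℝ] ℝ) (ε : ℝ) (u : MvPolynomial (Fin n) ℝ) :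
      ((Φ u).map (φ : R →+* ℝ)).eval ε = eval (fun i => φ (X i) + v i * ε) u := by
    have hcomp : (realPointPolynomial φ ε).comp Φ = aeval fun i => φ (X i) + v i * ε :=
      MvPolynomial.algHom_ext fun i => by simp [Φ, realPointPolynomial_apply]
    rw [← realPointPolynomial_apply]
    exact DFunLike.congr_fun hcomp u
  have hΦq : Φ q ≠ 0 := fun h₀ => hc (by simpa [h₀, v] using (hΦ φ₀ 1 q).symm)
  refine ⟨(Φ q).trailingCoeff, Polynomial.trailingCoeff_nonzero_iff_nonzero.2 hΦq,
    (Φ p).coeff (Φ q).natTrailingDegree, fun φ => ?_⟩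
  have hline : Continuous fun ε => h fun i => φ (X i) + v i * ε :=
    hh.continuous.comp (by fun_prop)
  simpa [Polynomial.trailingCoeff] using coeff_mul_eq_of_eval_mul_eq hline
    (Q := (Φ q).map (φ : R →+* ℝ)) (P := (Φ p).map (φ : R →+* ℝ))
    (i := (Φ q).natTrailingDegree) (fun ε => by rw [hΦ, hΦ, hpq]) fun j hj => by
      rw [Polynomial.coeff_map, Polynomial.coeff_eq_zero_of_lt_natTrailingDegree hj, map_zero]

theorem IsRegulous.exists_realPoint_apply_eq (hh : IsRegulous n k h) {Ω S : Type*}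
    [CommRing S] [Algebra ℝ S] {l : Filter Ω} [NeBot l] {e : Ω → S →ₐ[ℝ] ℝ} (he : IsGeneric l e)
    {X : Fin n → S} {y : S} (hy : ∀ᶠ ω in l, e ω y = h fun i => e ω (X i)) :
    ∃ s ≠ 0, ∀ φ : S →ₐ[ℝ] ℝ, φ s ≠ 0 → φ y = h fun i => φ (X i) := by
  obtain ⟨ω, -⟩ := hy.exists
  obtain ⟨s, hs, r, hsr⟩ := hh.exists_realPoint_mul_eq (e ω) X
  have hsy : s * y - r = 0 := he.eq_zero_of_eventually <| hy.mono fun ω hω => by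
    rw [map_sub, map_mul, hω, hsr, sub_self]
  refine ⟨s, hs, fun φ hφ => mul_left_cancel₀ hφ ?_⟩
  rw [hsr, ← map_mul, sub_eq_zero.1 hsy]

theorem exists_mem_forall_mem_eq_zero (I : Ideal (regulousRing n k)) :
    ∃ g ∈ I, ∀ x, g.1 x = 0 → ∀ g' ∈ I, g'.1 x = 0 := by
  by_contra! hI
  let N (g : I) : Set (Fin n → ℝ) := {x | g.1.1 x = 0 ∧ ∃ g' ∈ I, g'.1 x ≠ 0}
  have hdir : Directed (· ≥ ·) fun g => 𝓟 (N g) := fun g₁ g₂ => by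
    refine ⟨g₁ * g₁ + g₂ * g₂, principal_mono.2 fun x hx => ⟨?_, hx.2⟩,
      principal_mono.2 fun x hx => ⟨?_, hx.2⟩⟩
    · exact (mul_self_add_mul_self_eq_zero.1 hx.1).1
    · exact (mul_self_add_mul_self_eq_zero.1 hx.1).2
  have : NeBot (⨅ g, 𝓟 (N g)) :=
    iInf_neBot_of_directed' hdir fun g => principal_neBot_iff.2 (hI g g.2)
  obtain ⟨U, hU⟩ := Ultrafilter.exists_le (⨅ g, 𝓟 (N g))
  have hUN (g : I) : ∀ᶠ x in U, x ∈ N g := hU (mem_iInf_of_mem g (mem_principal_self _))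
  obtain ⟨P, hP, e, he, heX⟩ := exists_isGeneric U id
  obtain ⟨t, ht, hdense⟩ := exists_frequently_realPoint_ne_zero (S := MvPolynomial (Fin n) ℝ ⧸ P)
  obtain ⟨x, hxt, hxX, -, g, hg, hgx⟩ := ((he t ht).and (heX.and (hUN 0))).exists
  have hgy : ∀ᶠ x in U, e x 0 = g.1 fun i => e x (Ideal.Quotient.mk P (X i)) := by
    filter_upwards [heX, hUN ⟨g, hg⟩] with x hxX hxg
    rw [map_zero, funext hxX]
    exact hxg.1.symm
  obtain ⟨s, hs, hsg⟩ := g.2.exists_realPoint_apply_eq he hgy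
  rw [← id_eq x, ← funext hxX] at hgx
  have hne : ∀ᶠ φ in 𝓝 (e x), g.1 (fun i => φ (Ideal.Quotient.mk P (X i))) ≠ 0 :=
    ContinuousAt.eventually_ne (Continuous.continuousAt <| g.2.continuous.comp <|
      continuous_pi fun i => continuous_realPoint_apply _) hgx
  obtain ⟨φ, hφs, hφ⟩ := ((hdense _ hxt s hs).and_eventually hne).exists
  exact hφ (by rw [← hsg φ hφs, map_zero])

end RegulousRealPoints

section Lojasiewicz

variable {Ω S : Type*} [CommRing S] [Algebra ℝ S] {l : Filter Ω} {e : Ω → S →ₐ[ℝ] ℝ}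

theorem IsGeneric.eventually_exists_lt [IsDomain S] [Algebra.FiniteType ℝ S] {R : Type*}
    [CommRing R] [Algebra ℝ R] [Algebra R S] [IsScalarTower ℝ R S] (he : IsGeneric l e) {y : S}
    (hy : Transcendental R y) {s : S} (hs : s ≠ 0) {κ : Type*} [Finite κ] {c : κ → S}
    (hc : ∀ᶠ ω in l, ∀ i, 0 ≤ e ω (c i)) :
    ∀ᶠ ω in l, ∃ φ : S →ₐ[ℝ] ℝ, (∀ a : R, φ (algebraMap R S a) = e ω (algebraMap R S a)) ∧
      φ y < e ω y ∧ φ s ≠ 0 ∧ ∀ i, 0 ≤ φ (c i) := by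
  obtain ⟨t, ht, hlower⟩ := exists_frequently_realPoint_lt hy
  have hpos : ∀ᶠ ω in l, ∀ i, c i = 0 ∨ 0 < e ω (c i) := by
    refine eventually_all.2 fun i => ?_
    by_cases hi : c i = 0
    · exact .of_forall fun _ => .inl hi
    · exact (hc.and (he _ hi)).mono fun ω hω => .inr ((hω.1 i).lt_of_ne' hω.2)
  filter_upwards [he t ht, he s hs, hpos] with ω hωt hωs hωc
  have hnear : ∀ᶠ φ in 𝓝 (e ω), φ s ≠ 0 ∧ ∀ i, 0 ≤ φ (c i) := by
    refine ((continuous_realPoint_apply s).continuousAt.eventually_ne hωs).and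
      (eventually_all.2 fun i => ?_)
    obtain hi | hi := hωc i
    · exact .of_forall fun φ => (hi ▸ map_zero φ).ge
    · exact ((continuous_realPoint_apply _).continuousAt.eventually (lt_mem_nhds hi)).mono
        fun φ => le_of_lt
  exact ((hlower _ hωt).and_eventually hnear).exists.imp fun φ h => ⟨h.1.1, h.1.2, h.2⟩

/-- The elements of `S` growing at most polynomially in `s` along the family `e`. -/
def polynomialGrowth {s : S} (hs : Tendsto (fun ω => e ω s) l atTop) : Subalgebra ℝ S where
  carrier := {b | ∃ M : ℕ, ∀ᶠ ω in l, |e ω b| ≤ e ω s ^ M}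
  add_mem' := by
    rintro b c ⟨M, hM⟩ ⟨N, hN⟩
    refine ⟨max M N + 1, ?_⟩
    filter_upwards [hM, hN, hs.eventually_ge_atTop 2] with ω hb hc h2
    have h1 : 1 ≤ e ω s := one_le_two.trans h2
    calc |e ω (b + c)| ≤ |e ω b| + |e ω c| := map_add (e ω) b c ▸ abs_add_le _ _
      _ ≤ e ω s ^ max M N + e ω s ^ max M N :=
        add_le_add (hb.trans (pow_le_pow_right₀ h1 (le_max_left M N)))
          (hc.trans (pow_le_pow_right₀ h1 (le_max_right M N)))
      _ = e ω s ^ max M N * 2 := (mul_two _).symm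
      _ ≤ e ω s ^ (max M N + 1) := by rw [pow_succ]; gcongr
  mul_mem' := by
    rintro b c ⟨M, hM⟩ ⟨N, hN⟩
    refine ⟨M + N, ?_⟩
    filter_upwards [hM, hN] with ω hb hc
    rw [map_mul, abs_mul, pow_add]
    exact mul_le_mul hb hc (abs_nonneg _) ((abs_nonneg _).trans hb)
  algebraMap_mem' r := by
    refine ⟨1, ?_⟩
    filter_upwards [hs.eventually_ge_atTop |r|] with ω hω
    simpa using hω

theorem exists_eventually_one_le_pow_mul {s y : S} (hs : Tendsto (fun ω => e ω s) l atTop)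
    (hy : y ∈ polynomialGrowth hs) (hy₀ : y ∈ nonZeroDivisors S)
    (halg : IsAlgebraic (Algebra.adjoin ℝ {s}) y) :
    ∃ M : ℕ, ∀ᶠ ω in l, 1 ≤ e ω s ^ M * |e ω y| := by
  obtain ⟨p, hp₀, hp⟩ := halg.exists_nonzero_coeff_and_aeval_eq_zero hy₀
  have hle : Algebra.adjoin ℝ {s} ≤ polynomialGrowth hs := by
    refine Algebra.adjoin_le (Set.singleton_subset_iff.2 ⟨1, ?_⟩)
    exact (hs.eventually_ge_atTop 0).mono fun ω hω => by rw [abs_of_nonneg hω, pow_one]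
  obtain ⟨M, hM⟩ : Polynomial.aeval y p.divX ∈ polynomialGrowth hs := by
    rw [Polynomial.aeval_eq_sum_range]
    exact sum_mem fun i _ => mul_mem (hle (p.divX.coeff i).2) (pow_mem hy i)
  obtain ⟨q, hq⟩ : ∃ q : Polynomial ℝ, Polynomial.aeval s q = (p.coeff 0 : S) := by
    rw [← AlgHom.mem_range, ← Algebra.adjoin_singleton_eq_range_aeval]
    exact (p.coeff 0).2
  have hyq : Polynomial.aeval y p.divX * y + Polynomial.aeval s q = 0 := by
    rw [← p.divX_mul_X_add] at hp
    simpa [hq] using hp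
  have hdeg : 0 < (q * Polynomial.X).degree := by
    have hq₀ : q ≠ 0 := fun h => hp₀ (Subtype.ext (by rw [← hq, h, map_zero]; rfl))
    rw [← Polynomial.natDegree_pos_iff_degree_pos, Polynomial.natDegree_mul_X hq₀]
    exact Nat.succ_pos _
  refine ⟨M + 1, ?_⟩
  filter_upwards [hM, ((Polynomial.abs_tendsto_atTop _ hdeg).comp hs).eventually_ge_atTop 1,
    hs.eventually_ge_atTop 0] with ω hb hge h0
  have hq' : |q.eval (e ω s)| = |e ω (Polynomial.aeval y p.divX)| * |e ω y| := by
    rw [← abs_mul, ← map_mul, eq_neg_of_add_eq_zero_left hyq, map_neg, abs_neg,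
      ← Polynomial.aeval_algHom_apply, Polynomial.coe_aeval_eq_eval]
  calc 1 ≤ |(q * Polynomial.X).eval (e ω s)| := hge
    _ = e ω s * (|e ω (Polynomial.aeval y p.divX)| * |e ω y|) := by
      rw [Polynomial.eval_mul_X, abs_mul, hq', abs_of_nonneg h0, mul_comm]
    _ ≤ e ω s * (e ω s ^ M * |e ω y|) := by gcongr
    _ = e ω s ^ (M + 1) * |e ω y| := by ring

variable {n k : ℕ} {f g : (Fin n → ℝ) → ℝ}

/-- The compact sets over which Łojasiewicz's inequality `f ^ M = O(g)` is tested by letting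
`s → ∞`. -/
def lojasiewiczSet (f : (Fin n → ℝ) → ℝ) (s : ℝ) : Set (Fin n → ℝ) :=
  {x | ∑ i, x i ^ 2 ≤ s ∧ 1 ≤ s * f x}

theorem isCompact_lojasiewiczSet (hf : Continuous f) (s : ℝ) : IsCompact (lojasiewiczSet f s) := by
  refine Metric.isCompact_of_isClosed_isBounded ?_ ?_
  · have hsum : Continuous fun x : Fin n → ℝ => ∑ i, x i ^ 2 := by fun_prop
    exact (isClosed_le hsum continuous_const).inter
      (isClosed_le continuous_const (continuous_const.mul hf))
  · refine isBounded_iff_forall_norm_le.2 ⟨√s, fun x hx => ?_⟩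
    refine (pi_norm_le_iff_of_nonneg (Real.sqrt_nonneg s)).2 fun i => Real.abs_le_sqrt ?_
    exact (Finset.single_le_sum (fun j _ => sq_nonneg (x j)) (Finset.mem_univ i)).trans hx.1

-- Otherwise `y` could be lowered near the minimum while keeping `s` and the inequalities.
theorem IsGeneric.isAlgebraic_of_isMinOn [IsDomain S] [Algebra.FiniteType ℝ S] [NeBot l]
    (he : IsGeneric l e) (hf : IsRegulous n k f) (hg : IsRegulous n k g) {s u y : S} {x : Fin n → S}
    (hu : ∀ᶠ ω in l, e ω u = f fun i => e ω (x i)) (hy : ∀ᶠ ω in l, e ω y = g fun i => e ω (x i))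
    (hx : ∀ᶠ ω in l, (fun i => e ω (x i)) ∈ lojasiewiczSet f (e ω s))
    (hmin : ∀ᶠ ω in l, IsMinOn g (lojasiewiczSet f (e ω s)) fun i => e ω (x i)) :
    IsAlgebraic (Algebra.adjoin ℝ {s}) y := by
  by_contra hy_tr
  obtain ⟨a, ha, huφ⟩ := hf.exists_realPoint_apply_eq he hu
  obtain ⟨b, hb, hyφ⟩ := hg.exists_realPoint_apply_eq he hy
  have hineq : ∀ᶠ ω in l, ∀ i, 0 ≤ e ω (![s - ∑ i, x i ^ 2, s * u - 1] i) := by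
    filter_upwards [hx, hu] with ω hxω huω
    simpa [Fin.forall_fin_two, huω] using And.intro hxω.1 hxω.2
  obtain ⟨ω, ⟨φ, hφs, hφy, hφ₀, hφ⟩, hminω, hyω⟩ := ((he.eventually_exists_lt hy_tr
    (mul_ne_zero ha hb) hineq).and (hmin.and hy)).exists
  rw [map_mul, mul_ne_zero_iff] at hφ₀
  have hφs' : φ s = e ω s := hφs ⟨s, Algebra.self_mem_adjoin_singleton ℝ s⟩
  have hmem : (fun i => φ (x i)) ∈ lojasiewiczSet f (e ω s) := by
    simpa [lojasiewiczSet, Fin.forall_fin_two, hφs', huφ φ hφ₀.1] using hφ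
  have hle : g (fun i => e ω (x i)) ≤ g fun i => φ (x i) := hminω hmem
  rw [← hyω, ← hyφ φ hφ₀.2] at hle
  exact hle.not_gt hφy

theorem IsRegulous.exists_eventually_one_le_pow_mul_of_isMinOn (hf : IsRegulous n k f)
    (hg : IsRegulous n k g) {U : Ultrafilter Ω} {s : Ω → ℝ} {x : Ω → Fin n → ℝ}
    (hs : Tendsto s U atTop) (hx : ∀ᶠ ω in U, x ω ∈ lojasiewiczSet f (s ω))
    (hmin : ∀ᶠ ω in U, IsMinOn g (lojasiewiczSet f (s ω)) (x ω))
    (hg₁ : ∀ᶠ ω in U, |g (x ω)| ≤ 1) (hg₀ : ∀ᶠ ω in U, g (x ω) ≠ 0) :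
    ∃ M : ℕ, ∀ᶠ ω in U, 1 ≤ s ω ^ M * |g (x ω)| := by
  obtain ⟨P, hP, e, he, heX⟩ := exists_isGeneric U
    fun ω => Sum.elim ![s ω, f (x ω), g (x ω)] (x ω)
  let a (i) := Ideal.Quotient.mk P (X i)
  have hes : ∀ᶠ ω in U, e ω (a (.inl 0)) = s ω := heX.mono fun ω h => h (.inl 0)
  have heg : ∀ᶠ ω in U, e ω (a (.inl 2)) = g (x ω) := heX.mono fun ω h => h (.inl 2)
  have hex : ∀ᶠ ω in U, (fun i => e ω (a (.inr i))) = x ω :=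
    heX.mono fun ω h => _root_.funext fun i => h (.inr i)
  have halg : IsAlgebraic (Algebra.adjoin ℝ {a (.inl 0)}) (a (.inl 2)) :=
    he.isAlgebraic_of_isMinOn hf hg
      ((heX.and hex).mono fun ω h => (h.1 (.inl 1)).trans (congrArg f h.2.symm))
      ((heg.and hex).mono fun ω h => h.1.trans (congrArg g h.2.symm))
      ((hx.and (hes.and hex)).mono fun ω h => by rw [h.2.1, h.2.2]; exact h.1)
      ((hmin.and (hes.and hex)).mono fun ω h => by rw [h.2.1, h.2.2]; exact h.1)
  have hne : a (.inl 2) ≠ 0 := fun h => by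
    obtain ⟨ω, h₀, hω⟩ := (hg₀.and heg).exists
    exact h₀ (by rw [← hω, h, map_zero])
  obtain ⟨M, hM⟩ := exists_eventually_one_le_pow_mul (hs.congr' (hes.mono fun ω => Eq.symm))
    ⟨0, (heg.and hg₁).mono fun ω h => by simpa [h.1] using h.2⟩
    (mem_nonZeroDivisors_of_ne_zero hne) halg
  exact ⟨M, (hM.and (hes.and heg)).mono fun ω h => by rw [← h.2.1, ← h.2.2]; exact h.1⟩

theorem IsRegulous.exists_eventually_forall_one_le_pow_mul (hf : IsRegulous n k f)
    (hg : IsRegulous n k g) (hg₀ : ∀ x, 0 ≤ g x) (hZ : ∀ x, g x = 0 → f x = 0) :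
    ∃ M : ℕ, ∀ᶠ s in atTop, ∀ x ∈ lojasiewiczSet f s, 1 ≤ s ^ M * g x := by
  by_contra! hno
  have hmin (m : ℕ) : ∃ s ≥ (m : ℝ), 1 ≤ s ∧ ∃ x ∈ lojasiewiczSet f s,
      IsMinOn g (lojasiewiczSet f s) x ∧ s ^ m * g x < 1 := by
    obtain ⟨s, ⟨y, hy, hlt⟩, hsm, hs₁⟩ := ((hno m).and_eventually
      ((eventually_ge_atTop (m : ℝ)).and (eventually_ge_atTop 1))).exists
    obtain ⟨x, hx, hxmin⟩ := (isCompact_lojasiewiczSet hf.continuous s).exists_isMinOn ⟨y, hy⟩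
      hg.continuous.continuousOn
    exact ⟨s, hsm, hs₁, x, hx, hxmin,
      (mul_le_mul_of_nonneg_left (hxmin hy) (by positivity)).trans_lt hlt⟩
  choose s hsm hs₁ x hx hxmin hlt using hmin
  have hs : Tendsto s (hyperfilter ℕ) atTop :=
    (tendsto_atTop_mono hsm tendsto_natCast_atTop_atTop).mono_left Nat.hyperfilter_le_atTop
  have hpos (m) : 0 < g (x m) := (hg₀ _).lt_of_ne' fun h => by
    have := (hx m).2
    rw [hZ _ h, mul_zero] at this
    exact this.not_gt one_pos
  have hle_one (m) : |g (x m)| ≤ 1 := by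
    rw [abs_of_pos (hpos m)]
    exact (le_mul_of_one_le_left (hpos m).le (one_le_pow₀ (hs₁ m))).trans (hlt m).le
  obtain ⟨M, hM⟩ := hf.exists_eventually_one_le_pow_mul_of_isMinOn hg hs (.of_forall hx)
    (.of_forall hxmin) (.of_forall hle_one) (.of_forall fun m => (hpos m).ne')
  obtain ⟨m, hMm, hle⟩ := (((eventually_ge_atTop M).filter_mono
    Nat.hyperfilter_le_atTop).and hM).exists
  rw [abs_of_pos (hpos m)] at hle
  exact (hlt m).not_ge (hle.trans (mul_le_mul_of_nonneg_right
    (pow_le_pow_right₀ (hs₁ m) hMm) (hpos m).le))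

theorem pow_succ_isBigO_of_eventually_one_le_pow_mul (hf : Continuous f) (hf₀ : ∀ x, 0 ≤ f x)
    (hg₀ : ∀ x, 0 ≤ g x) {M : ℕ}
    (hM : ∀ᶠ s in atTop, ∀ x ∈ lojasiewiczSet f s, 1 ≤ s ^ M * g x) (x₀ : Fin n → ℝ) :
    (fun x => f x ^ (M + 1)) =O[𝓝 x₀] g := by
  obtain ⟨s₀, hs₀⟩ := eventually_atTop.1 hM
  obtain ⟨B, hB⟩ := exists_gt (f x₀)
  obtain ⟨T, hT⟩ := exists_gt (max s₀ (∑ i, x₀ i ^ 2))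
  obtain ⟨hsT, hxT⟩ := max_lt_iff.1 hT
  have hsum : Continuous fun x : Fin n → ℝ => ∑ i, x i ^ 2 := by fun_prop
  let C := max 1 (B * T)
  refine .of_bound (B * C ^ M) ?_
  filter_upwards [hf.continuousAt.eventually (gt_mem_nhds hB),
    hsum.continuousAt.eventually (gt_mem_nhds hxT)] with x hxB hxT
  have hB₀ : 0 ≤ B := (hf₀ x).trans hxB.le
  have hT₀ : 0 ≤ T := (Finset.sum_nonneg fun i _ => sq_nonneg (x i)).trans hxT.le
  have hC : 1 ≤ C := le_max_left _ _
  rw [Real.norm_of_nonneg (pow_nonneg (hf₀ x) _), Real.norm_of_nonneg (hg₀ x), pow_succ',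
    mul_assoc]
  obtain hfx | hfx := (hf₀ x).eq_or_lt
  · rw [← hfx, zero_mul]
    exact mul_nonneg hB₀ (mul_nonneg (by positivity) (hg₀ x))
  -- The Łojasiewicz set containing `x` is the one with parameter `C / f x`.
  have hTs : T ≤ C / f x := by
    rw [le_div_iff₀ hfx, mul_comm]
    exact (mul_le_mul_of_nonneg_right hxB.le hT₀).trans (le_max_right _ _)
  have hmem : x ∈ lojasiewiczSet f (C / f x) :=
    ⟨hxT.le.trans hTs, by rwa [div_mul_cancel₀ _ hfx.ne']⟩
  have hle := hs₀ _ (hsT.le.trans hTs) x hmem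
  rw [div_pow, div_mul_eq_mul_div, one_le_div (pow_pos hfx M)] at hle
  exact mul_le_mul hxB.le hle (pow_nonneg hfx.le M) hB₀

theorem IsRegulous.exists_pow_isBigO (hf : IsRegulous n k f) (hg : IsRegulous n k g)
    (hZ : ∀ x, g x = 0 → f x = 0) : ∃ M : ℕ, ∀ x₀, (fun x => f x ^ M) =O[𝓝 x₀] g := by
  have hff : IsRegulous n k (f * f) := (regulousRing n k).mul_mem hf hf
  have hgg : IsRegulous n k (g * g) := (regulousRing n k).mul_mem hg hg
  obtain ⟨M, hM⟩ := hff.exists_eventually_forall_one_le_pow_mul hgg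
    (fun x => mul_self_nonneg (g x)) fun x hx => by simp [hZ x (mul_self_eq_zero.1 hx)]
  refine ⟨2 * (M + 1), fun x₀ => ?_⟩
  have hfg := pow_succ_isBigO_of_eventually_one_le_pow_mul hff.continuous
    (fun x => mul_self_nonneg (f x)) (fun x => mul_self_nonneg (g x)) hM x₀
  have hgg_le : (fun x => g x * g x) =O[𝓝 x₀] g := by
    simpa using (Asymptotics.isBigO_refl g _).mul (hg.continuous.continuousAt.isBigO_one ℝ)
  simpa only [pow_mul, sq, Pi.mul_apply] using hfg.trans hgg_le

end Lojasiewicz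

section PowDivPow

open Asymptotics

variable {M : ℕ}

theorem pow_div_pow_isBigO {α : Type*} {l : Filter α} {f g : α → ℝ} {a b : ℕ}
    (hfg : (fun x => f x ^ M) =O[l] g) (hab : M * b ≤ a) :
    (fun x => f x ^ a / g x ^ b) =O[l] fun x => f x ^ (a - M * b) := by
  have hbdd : (fun x => (f x ^ M) ^ b / g x ^ b) =O[l] fun _ => (1 : ℝ) :=
    (div_isBoundedUnder_of_isBigO (hfg.pow b)).isBigO_one ℝ
  refine ((isBigO_refl (fun x => f x ^ (a - M * b)) l).mul hbdd).congr
    (fun x => ?_) fun x => mul_one _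
  rw [← mul_div_assoc, ← pow_mul, ← pow_add, Nat.sub_add_cancel hab]

section Continuity

variable {X : Type*} [TopologicalSpace X] {f g : X → ℝ}

theorem eq_zero_of_pow_isBigO {x : X} (hfg : (fun x => f x ^ M) =O[𝓝 x] g) (hx : g x = 0) :
    f x = 0 :=
  eq_zero_of_pow_eq_zero (hfg.eq_zero_imp.self_of_nhds hx)

theorem continuous_pow_div_pow (hf : Continuous f) (hg : Continuous g)
    (hfg : ∀ x, (fun x => f x ^ M) =O[𝓝 x] g) {a b : ℕ} (hab : M * b < a) :
    Continuous fun x => f x ^ a / g x ^ b := by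
  refine continuous_iff_continuousAt.2 fun x => ?_
  by_cases hx : g x = 0
  · have hfx := eq_zero_of_pow_isBigO (hfg x) hx
    have hpow : Continuous fun y => f y ^ (a - M * b) := by fun_prop
    have hlim : Tendsto (fun y => f y ^ (a - M * b)) (𝓝 x) (𝓝 0) := by
      simpa [hfx, (Nat.sub_pos_of_lt hab).ne'] using hpow.tendsto x
    simpa [ContinuousAt, hfx, (Nat.zero_lt_of_lt hab).ne'] using
      (pow_div_pow_isBigO (hfg x) hab.le).trans_tendsto hlim
  · exact (hf.continuousAt.pow a).div (hg.continuousAt.pow b) (pow_ne_zero b hx)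

end Continuity

variable {E : Type*} [NormedAddCommGroup E] [NormedSpace ℝ E] {f g : E → ℝ}

theorem hasFDerivAt_pow_div_pow {Df Dg : E →L[ℝ] ℝ} {x : E} (hf : HasFDerivAt f Df x)
    (hg : HasFDerivAt g Dg x) (hx : g x ≠ 0) {a : ℕ} (ha : a ≠ 0) (b : ℕ) :
    HasFDerivAt (fun x => f x ^ a / g x ^ b)
      ((f x ^ (a - 1) / g x ^ (b + 1)) • ((a * g x) • Df - (b * f x) • Dg)) x := by
  simp only [div_eq_mul_inv]
  refine ((hf.pow a).mul ((hasDerivAt_inv (pow_ne_zero b hx)).comp_hasFDerivAt x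
    (hg.pow b))).congr_fderiv ?_
  obtain ⟨a, rfl⟩ := Nat.exists_eq_succ_of_ne_zero ha
  ext v
  obtain _ | b := b
  · simp [field]
  · simp only [Nat.succ_eq_add_one, add_tsub_cancel_right, nsmul_eq_mul, Function.comp_apply,
      add_apply, smul_apply, sub_apply, smul_eq_mul]
    field_simp
    ring

theorem hasFDerivAt_pow_div_pow_of_eq_zero {x : E} (hf : DifferentiableAt ℝ f x) (hfx : f x = 0)
    (hfg : (fun x => f x ^ M) =O[𝓝 x] g) {a b : ℕ} (hab : M * b + 1 < a) :
    HasFDerivAt (fun x => f x ^ a / g x ^ b) (0 : E →L[ℝ] ℝ) x := by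
  have hlin : f =O[𝓝 x] fun y => ‖y - x‖ := by
    simpa only [hfx, sub_zero] using hf.hasFDerivAt.isBigO_sub.norm_right
  exact ((pow_div_pow_isBigO hfg (by lia)).trans (hlin.pow _)).hasFDerivAt (by lia)

theorem contDiff_pow_div_pow {j : ℕ} (hf : ContDiff ℝ j f) (hg : ContDiff ℝ j g)
    (hfg : ∀ x, (fun x => f x ^ M) =O[𝓝 x] g) {a b : ℕ} (hab : M * (b + j) + j < a) :
    ContDiff ℝ j fun x => f x ^ a / g x ^ b := by
  induction j generalizing a b with
  | zero => exact contDiff_zero.2 (continuous_pow_div_pow hf.continuous hg.continuous hfg hab)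
  | succ j ih =>
    rw [Nat.cast_succ] at hf hg ⊢
    obtain ⟨Df, hDf, hDf'⟩ := contDiff_succ_iff_hasFDerivAt.1 hf
    obtain ⟨Dg, hDg, hDg'⟩ := contDiff_succ_iff_hasFDerivAt.1 hg
    have hfj : ContDiff ℝ j f := hf.of_le le_self_add
    have hgj : ContDiff ℝ j g := hg.of_le le_self_add
    refine contDiff_succ_iff_hasFDerivAt.2
      ⟨fun x => (f x ^ (a - 1) / g x ^ (b + 1)) • ((a * g x) • Df x - (b * f x) • Dg x), ?_,
        fun x => ?_⟩
    · refine (ih hfj hgj ?_).smul (((contDiff_const.mul hgj).smul hDf).sub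
        ((contDiff_const.mul hfj).smul hDg))
      rw [add_right_comm, add_assoc b]
      lia
    · by_cases hx : g x = 0
      · have hfx := eq_zero_of_pow_isBigO (hfg x) hx
        have ha : a - 1 ≠ 0 := by lia
        have hab' : M * b + 1 < a := by nlinarith
        simpa [hfx, ha] using
          hasFDerivAt_pow_div_pow_of_eq_zero (hDf' x).differentiableAt hfx (hfg x) hab'
      · exact hasFDerivAt_pow_div_pow (hDf' x) (hDg' x) hx (by lia) b

end PowDivPow

section Nullstellensatz

variable {n k : ℕ} {f g : (Fin n → ℝ) → ℝ}

theorem IsRegulous.pow_div (hf : IsRegulous n k f) (hg : IsRegulous n k g) {M : ℕ}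
    (hfg : ∀ x, (fun x => f x ^ M) =O[𝓝 x] g) {a : ℕ} (ha : M * (1 + k) + k < a) :
    IsRegulous n k fun x => f x ^ a / g x := by
  obtain ⟨hf, p₁, q₁, hq₁, h₁⟩ := hf
  obtain ⟨hg, p₂, q₂, hq₂, h₂⟩ := hg
  refine ⟨by simpa only [pow_one] using contDiff_pow_div_pow hf hg hfg ha, ?_⟩
  obtain rfl | hp₂ := eq_or_ne p₂ 0
  · have hg₀ : g = 0 := by
      refine Continuous.ext_on (dense_eval_ne_zero hq₂) hg.continuous continuous_const
        fun x hx => ?_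
      simpa [show eval x q₂ ≠ 0 from hx] using h₂ x
    exact ⟨0, 1, one_ne_zero, fun x => by simp [hg₀]⟩
  · refine ⟨p₁ ^ a * q₂, q₁ ^ a * p₂, mul_ne_zero (pow_ne_zero a hq₁) hp₂, fun x => ?_⟩
    simp only [map_mul, map_pow, ← h₁, ← h₂]
    by_cases hx : g x = 0
    · simp [hx, eq_zero_of_pow_isBigO (hfg x) hx, (Nat.zero_lt_of_lt ha).ne']
    · rw [mul_pow]
      field_simp

theorem IsRegulous.exists_pow_eq_mul (hf : IsRegulous n k f) (hg : IsRegulous n k g)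
    (hZ : ∀ x, g x = 0 → f x = 0) :
    ∃ (N : ℕ) (h : (Fin n → ℝ) → ℝ), IsRegulous n k h ∧ f ^ N = h * g := by
  obtain ⟨M, hM⟩ := hf.exists_pow_isBigO hg hZ
  refine ⟨M * (1 + k) + k + 1, _, hf.pow_div hg hM (Nat.lt_succ_self _),
    _root_.funext fun x => ?_⟩
  by_cases hx : g x = 0
  · simp [hx, hZ x hx]
  · exact (div_mul_cancel₀ _ hx).symm

theorem mem_radical_of_forall_eq_zero {I : Ideal (regulousRing n k)} {f : regulousRing n k}
    (hf : ∀ x, (∀ g ∈ I, g.1 x = 0) → f.1 x = 0) : f ∈ I.radical := by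
  obtain ⟨g, hgI, hg⟩ := exists_mem_forall_mem_eq_zero I
  obtain ⟨N, h, hh, hfN⟩ := f.2.exists_pow_eq_mul g.2 fun x hx => hf x (hg x hx)
  have hfN' : f ^ N = ⟨h, hh⟩ * g := Subtype.ext hfN
  exact ⟨N, hfN' ▸ I.mul_mem_left _ hgI⟩

end Nullstellensatz

/-- **Regulous functions, Corollaire `Nullstellensatz`**: the Nullstellensatz for the ring
`R^k(ℝⁿ)` of `k`-regulous functions.
(1) For every ideal `I`, the functions vanishing on `Z(I)` are exactly the radical of `I`.
(2) For every k-regulously closed set `F = Z(E)`, one has `Z(I(F)) = F`. -/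
theorem regulous_nullstellensatz (n k : ℕ) :
    (∀ I : Ideal (regulousRing n k),
      {f : regulousRing n k |
          ∀ x ∈ ⋂ g ∈ I, {x : Fin n → ℝ | (g : (Fin n → ℝ) → ℝ) x = 0},
            (f : (Fin n → ℝ) → ℝ) x = 0} =
        (I.radical : Set (regulousRing n k))) ∧
    (∀ E : Set (regulousRing n k),
      (⋂ f ∈ {f : regulousRing n k |
          ∀ x ∈ ⋂ g ∈ E, {x : Fin n → ℝ | (g : (Fin n → ℝ) → ℝ) x = 0},
            (f : (Fin n → ℝ) → ℝ) x = 0},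
        {x : Fin n → ℝ | (f : (Fin n → ℝ) → ℝ) x = 0}) =
      ⋂ g ∈ E, {x : Fin n → ℝ | (g : (Fin n → ℝ) → ℝ) x = 0}) := by
  simp only [Set.mem_iInter₂, Set.mem_ofPred_eq]
  refine ⟨fun I => Set.ext fun f => ⟨mem_radical_of_forall_eq_zero, ?_⟩,
    fun E => Set.ext fun x => ?_⟩
  · rintro ⟨N, hN⟩ x hx
    exact eq_zero_of_pow_eq_zero (hx _ hN)
  · simp only [Set.mem_iInter₂, Set.mem_ofPred_eq]
    exact ⟨fun hx g hg => hx g fun y hy => hy g hg, fun hx f hf => hf x hx⟩
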